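/- Suppose n is even, and let i, j, p, q be nonnegative integers with 2i+j ≤ n and 2p+q ≤ n. Then the product O(n−2i−j, i, j)·O(n−2p−q, p, q) in A is given as follows. If j and q are both even: it equals O(2n−2i−j−2p−q, p+i, q+j) + λ^{p+q}·O(n−j+q+1, p−i−1, n+2i+j−2p−q+1) when p > i, and O(2n−2i−j−2p−q, p+i, q+j) + λ^{p+q}·O(n−2i−j+q+2p, i−p, n−q+j) when p ≤ i. If j is even and q is odd (assuming additionally 2p+q ≤ n+j−1): it equals λ^{p+q}·O(n−2i−j+q−1, i+p+1, n−2p−q+j−1) + O(2n−j−2p−q, p−i, 2i+j+q) when p ≥ i, and λ^{p+q}·O(n−2i−j+q−1, i+p+1, n−2p−q+j−1) + O(2n−2i−j−q+1, i−p−1, 2p+j+q+1) when p < i. If j is odd and q is even: it equals λ^{p+q}·O(n+q−2i−j, i+p, n+j−2p−q) + O(2n−j−2p−q+1, p−i−1, q+2i+j+1) when p > i, and λ^{p+q}·O(n+q−2i−j, i+p, n+j−2p−q) + O(2n−2i−j−q, i−p, 2p+q+j) when p ≤ i. If j and q are both odd: it equals O(2n−2i−j−2p−q−1, i+p+1, q+j−1)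 + λ^{p+q}·O(n+q−j, p−i, n+2i+j−2p−q) when p ≥ i, and O(2n−2i−j−2p−q−1, i+p+1, q+j−1) + λ^{p+q}·O(n−2i−j+2p+q+1, i−p−1, n−q+j+1) when p < i. -/

import Mathlib

/-!
Setting: `lam n = exp(2πi/n)` is a primitive `n`-th root of unity in `ℂ`.
`DUAlg` is the graded down-up algebra `A(0,1) = ℂ⟨u,d⟩/(d²u - ud², du² - u²d)`,
with generators `uGen`, `dGen`.  The automorphism `g` (of order `2n`) is
determined by `g u = d`, `g d = lam n • u`, and generates the cyclic group `G`,
so that the fixed subring `A^G` is `{a | g a = a}`.  The orbit sum is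
`orbitSum n a b c = u^a (du)^b d^c + (lam n)^(b+c) • (d^a (ud)^b u^c)`.
-/

noncomputable section

/-- `lam n = exp(2πi/n)`, a primitive `n`-th root of unity. -/
def lam (n : ℕ) : ℂ := Complex.exp (2 * (Real.pi : ℂ) * Complex.I / (n : ℂ))

/-- The defining relations of the down-up algebra `A(0,1)`:
`d²u = ud²` and `du² = u²d` (here `0` plays the role of `u`, `1` of `d`). -/
inductive DownUpRel : FreeAlgebra ℂ (Fin 2) → FreeAlgebra ℂ (Fin 2) → Prop
  | rel1 : DownUpRel (FreeAlgebra.ι ℂ 1 * FreeAlgebra.ι ℂ 1 * FreeAlgebra.ι ℂ 0)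
      (FreeAlgebra.ι ℂ 0 * FreeAlgebra.ι ℂ 1 * FreeAlgebra.ι ℂ 1)
  | rel2 : DownUpRel (FreeAlgebra.ι ℂ 1 * FreeAlgebra.ι ℂ 0 * FreeAlgebra.ι ℂ 0)
      (FreeAlgebra.ι ℂ 0 * FreeAlgebra.ι ℂ 0 * FreeAlgebra.ι ℂ 1)

/-- The graded down-up algebra `A(0,1)`. -/
abbrev DUAlg : Type := RingQuot DownUpRel

/-- The generator `u` of `A(0,1)`. -/
def uGen : DUAlg := RingQuot.mkAlgHom ℂ DownUpRel (FreeAlgebra.ι ℂ 0)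

/-- The generator `d` of `A(0,1)`. -/
def dGen : DUAlg := RingQuot.mkAlgHom ℂ DownUpRel (FreeAlgebra.ι ℂ 1)

/-- Orbit sum `O(a,b,c) = u^a (du)^b d^c + λ^(b+c) d^a (ud)^b u^c`. -/
def orbitSum (n a b c : ℕ) : DUAlg :=
  uGen ^ a * (dGen * uGen) ^ b * dGen ^ c
    + (lam n ^ (b + c)) • (dGen ^ a * (uGen * dGen) ^ b * uGen ^ c)

structure DUSys {R A : Type*} [CommRing R] [Ring A] [Algebra R A]
    (U D : R) (u d : A) : Prop where
  uu : u * u = U • 1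
  dd : d * d = D • 1

namespace DUSys

variable {R A : Type*} [CommRing R] [Ring A] [Algebra R A] {U D : R} {u d : A}

theorem swap (h : DUSys U D u d) : DUSys D U d u := ⟨h.dd, h.uu⟩

theorem u_even (h : DUSys U D u d) (k : ℕ) : u ^ (2 * k) = U ^ k • (1 : A) := by
  rw [pow_mul, pow_two, h.uu, smul_pow, one_pow]

theorem u_odd (h : DUSys U D u d) (k : ℕ) : u ^ (2 * k + 1) = U ^ k • u := by
  rw [pow_succ, h.u_even, smul_mul_assoc, one_mul]

theorem xu (u d : A) (k : ℕ) : (d * u) ^ k * d = d * (u * d) ^ k :=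
  (SemiconjBy.pow_right (show SemiconjBy d (u * d) (d * u) from (mul_assoc _ _ _).symm) k).symm

theorem yd (h : DUSys U D u d) (k : ℕ) : (u * d) ^ k * d = d * (d * u) ^ k := by
  refine (SemiconjBy.pow_right (show SemiconjBy d (d * u) (u * d) from ?_) k).symm
  show d * (d * u) = u * d * d
  rw [← mul_assoc, h.dd, mul_assoc, h.dd]; simp

theorem xy (h : DUSys U D u d) (k : ℕ) :
    (u * d) ^ k * (d * u) ^ k = (U * D) ^ k • (1 : A) := by
  have e1 : (u * d) * (d * u) = (U * D) • (1 : A) := by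
    rw [mul_assoc, ← mul_assoc d, h.dd]; simp [h.uu, smul_smul, mul_comm]
  have e2 : (d * u) * (u * d) = (U * D) • (1 : A) := by
    rw [mul_assoc, ← mul_assoc u, h.uu]; simp [h.dd, smul_smul]
  have c : Commute (u * d) (d * u) := e1.trans e2.symm
  rw [← c.mul_pow, e1, smul_pow, one_pow]

/-- `p = i + k`-type cancellation. -/
theorem yx_le (h : DUSys U D u d) (i k : ℕ) :
    (u * d) ^ i * (d * u) ^ (i + k) = (U * D) ^ i • (d * u) ^ k := by
  rw [pow_add, ← mul_assoc, h.xy, smul_mul_assoc, one_mul]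

theorem yx_gt (h : DUSys U D u d) (i k : ℕ) :
    (u * d) ^ (i + k) * (d * u) ^ i = (U * D) ^ i • (u * d) ^ k := by
  rw [add_comm, pow_add, mul_assoc, h.xy, mul_smul_comm, mul_one]

theorem y_succ (u d : A) (k : ℕ) : (u * d) ^ (k + 1) = u * (d * u) ^ k * d := by
  rw [mul_assoc, xu, ← mul_assoc, pow_succ']

/-- `u^a x^b d^c` -/
def T (u d : A) (a b c : ℕ) : A := u ^ a * (d * u) ^ b * d ^ c

theorem T_ee (h : DUSys U D u d) (a b c : ℕ) :
    T u d (2 * a) b (2 * c) = (U ^ a * D ^ c) • (d * u) ^ b := by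
  rw [T, h.u_even, h.swap.u_even]; simp [smul_smul, mul_comm]

theorem T_oo (h : DUSys U D u d) (a b c : ℕ) :
    T u d (2 * a + 1) b (2 * c + 1) = (U ^ a * D ^ c) • (u * d) ^ (b + 1) := by
  rw [T, h.u_odd, h.swap.u_odd, y_succ]; simp [smul_smul, mul_comm]

theorem ee (h : DUSys U D u d) (a i j a' p q : ℕ) (ha : Even a) (hj : Even j) (ha' : Even a')
    (hq : Even q) :
    T u d a i j * T u d a' p q = T u d (a + a') (p + i) (q + j) ∧
    (p > i → T u d a i j * T d u a' p q = T u d (a + q + 2 * i + 1) (p - i - 1) (a' + j + 2 * i + 1)) ∧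
    (p ≤ i → T u d a i j * T d u a' p q = T u d (a + q + 2 * p) (i - p) (a' + j + 2 * p)) := by
  obtain ⟨a, rfl⟩ := ha.exists_two_nsmul
  obtain ⟨j, rfl⟩ := hj.exists_two_nsmul
  obtain ⟨a', rfl⟩ := ha'.exists_two_nsmul
  obtain ⟨q, rfl⟩ := hq.exists_two_nsmul
  simp only [smul_eq_mul, ← mul_add, h.T_ee, h.swap.T_ee, h.T_oo]
  refine ⟨?_, fun hp => ?_, fun hp => ?_⟩
  · simp only [smul_mul_smul_comm, ← pow_add]
    rw [add_comm p i]; congr 1; ring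
  · obtain ⟨k, rfl⟩ := Nat.exists_eq_add_of_lt hp
    rw [show i + k + 1 - i - 1 + 1 = k + 1 by omega, smul_mul_smul_comm, add_assoc i,
      h.swap.yx_le, smul_smul]
    congr 1; ring
  · obtain ⟨k, rfl⟩ := Nat.exists_eq_add_of_le hp
    rw [show p + k - p = k by omega, smul_mul_smul_comm, h.swap.yx_gt, smul_smul]
    congr 1; ring

theorem T_eo (h : DUSys U D u d) (a b c : ℕ) :
    T u d (2 * a) b (2 * c + 1) = (U ^ a * D ^ c) • (d * (u * d) ^ b) := by
  rw [T, h.u_even, h.swap.u_odd, ← xu]; simp [smul_smul, mul_comm]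

theorem T_oe (h : DUSys U D u d) (a b c : ℕ) :
    T u d (2 * a + 1) b (2 * c) = (U ^ a * D ^ c) • (u * (d * u) ^ b) := by
  rw [T, h.u_odd, h.swap.u_even]; simp [smul_smul, mul_comm]

theorem x_succ' (u d : A) (k : ℕ) : (d * u) ^ k * (d * u) = (d * u) ^ (k + 1) := (pow_succ _ _).symm

theorem eo (h : DUSys U D u d) (a i j a' p q : ℕ) (ha : Even a) (hj : Even j) (ha' : Odd a')
    (hq : Odd q) :
    T u d a i j * T d u a' p q = T u d (a + q - 1) (i + p + 1) (a' + j - 1) ∧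
    (p ≥ i → T u d a i j * T u d a' p q = T u d (a + a' + 2 * i) (p - i) (2 * i + j + q)) ∧
    (p < i → T u d a i j * T u d a' p q =
      T u d (a + a' + 2 * p + 1) (i - p - 1) (2 * p + j + q + 1)) := by
  obtain ⟨a, rfl⟩ := ha.exists_two_nsmul
  obtain ⟨j, rfl⟩ := hj.exists_two_nsmul
  obtain ⟨a', rfl⟩ := ha'
  obtain ⟨q, rfl⟩ := hq
  simp only [smul_eq_mul]
  refine ⟨?_, fun hp => ?_, fun hp => ?_⟩
  · rw [show 2 * a + (2 * q + 1) - 1 = 2 * (a + q) by omega,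
      show 2 * a' + 1 + 2 * j - 1 = 2 * (a' + j) by omega, h.T_ee, h.T_ee, h.swap.T_oo,
      smul_mul_smul_comm, ← pow_add, ← add_assoc]
    congr 1; ring
  · obtain ⟨k, rfl⟩ := Nat.exists_eq_add_of_le hp
    rw [show 2 * a + (2 * a' + 1) + 2 * i = 2 * (a + a' + i) + 1 by ring,
      show 2 * i + 2 * j + (2 * q + 1) = 2 * (i + j + q) + 1 by ring,
      show i + k - i = k by omega, h.T_ee, h.T_oo, h.T_oo, smul_mul_smul_comm, add_assoc i,
      h.swap.yx_le, smul_smul]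
    congr 1; ring
  · obtain ⟨k, rfl⟩ := Nat.exists_eq_add_of_lt hp
    rw [show 2 * a + (2 * a' + 1) + 2 * p + 1 = 2 * (a + a' + p + 1) by ring,
      show 2 * p + 2 * j + (2 * q + 1) + 1 = 2 * (p + j + q + 1) by ring,
      show p + k + 1 - p - 1 = k by omega, h.T_ee, h.T_oo, h.T_ee, smul_mul_smul_comm,
      show p + k + 1 = (p + 1) + k by ring,
      h.swap.yx_gt, smul_smul]
    congr 1; ring

theorem oe (h : DUSys U D u d) (a i j a' p q : ℕ) (ha : Odd a) (hj : Odd j) (ha' : Even a')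
    (hq : Even q) :
    T u d a i j * T d u a' p q = T u d (a + q) (i + p) (a' + j) ∧
    (p > i → T u d a i j * T u d a' p q =
      T u d (a + a' + 2 * i + 1) (p - i - 1) (q + 2 * i + j + 1)) ∧
    (p ≤ i → T u d a i j * T u d a' p q = T u d (a + a' + 2 * p) (i - p) (2 * p + q + j)) := by
  obtain ⟨a, rfl⟩ := ha
  obtain ⟨j, rfl⟩ := hj
  obtain ⟨a', rfl⟩ := ha'.exists_two_nsmul
  obtain ⟨q, rfl⟩ := hq.exists_two_nsmul
  simp only [smul_eq_mul]
  refine ⟨?_, fun hp => ?_, fun hp => ?_⟩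
  · rw [show 2 * a + 1 + 2 * q = 2 * (a + q) + 1 by ring,
      show 2 * a' + (2 * j + 1) = 2 * (a' + j) + 1 by ring, h.T_oo, h.T_oo, h.swap.T_ee,
      smul_mul_smul_comm, ← pow_add]
    rw [show i + 1 + p = i + p + 1 by ring]
    congr 1; ring
  · obtain ⟨k, rfl⟩ := Nat.exists_eq_add_of_lt hp
    rw [show 2 * a + 1 + 2 * a' + 2 * i + 1 = 2 * (a + a' + i + 1) by ring,
      show 2 * q + 2 * i + (2 * j + 1) + 1 = 2 * (i + j + q + 1) by ring,
      show i + k + 1 - i - 1 = k by omega, h.T_ee, h.T_oo, h.T_ee, smul_mul_smul_comm,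
      show i + k + 1 = (i + 1) + k by ring,
      h.yx_le, smul_smul]
    congr 1; ring
  · obtain ⟨k, rfl⟩ := Nat.exists_eq_add_of_le hp
    rw [show 2 * a + 1 + 2 * a' + 2 * p = 2 * (a + a' + p) + 1 by ring,
      show 2 * p + 2 * q + (2 * j + 1) = 2 * (p + j + q) + 1 by ring,
      show p + k - p = k by omega, h.T_ee, h.T_oo, h.T_oo, smul_mul_smul_comm, add_assoc p,
      h.yx_gt, smul_smul]
    congr 1; ring

theorem oo (h : DUSys U D u d) (a i j a' p q : ℕ) (ha : Odd a) (hj : Odd j) (ha' : Odd a')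
    (hq : Odd q) :
    T u d a i j * T u d a' p q = T u d (a + a' - 1) (i + p + 1) (q + j - 1) ∧
    (p ≥ i → T u d a i j * T d u a' p q = T u d (a + q + 2 * i) (p - i) (a' + j + 2 * i)) ∧
    (p < i → T u d a i j * T d u a' p q =
      T u d (a + q + 2 * p + 1) (i - p - 1) (a' + j + 2 * p + 1)) := by
  obtain ⟨a, rfl⟩ := ha
  obtain ⟨j, rfl⟩ := hj
  obtain ⟨a', rfl⟩ := ha'
  obtain ⟨q, rfl⟩ := hq
  refine ⟨?_, fun hp => ?_, fun hp => ?_⟩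
  · rw [show 2 * a + 1 + (2 * a' + 1) - 1 = 2 * (a + a') + 1 by omega,
      show 2 * q + 1 + (2 * j + 1) - 1 = 2 * (q + j) + 1 by omega, h.T_oo, h.T_oo, h.T_oo,
      smul_mul_smul_comm, ← pow_add]
    rw [show i + 1 + (p + 1) = i + p + 1 + 1 by ring]
    congr 1; ring
  · obtain ⟨k, rfl⟩ := Nat.exists_eq_add_of_le hp
    rw [show 2 * a + 1 + (2 * q + 1) + 2 * i = 2 * (a + q + i + 1) by ring,
      show 2 * a' + 1 + (2 * j + 1) + 2 * i = 2 * (a' + j + i + 1) by ring,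
      show i + k - i = k by omega, h.T_oo, h.swap.T_oo, h.T_ee, smul_mul_smul_comm,
      show i + k + 1 = (i + 1) + k by ring,
      h.yx_le, smul_smul]
    congr 1; ring
  · obtain ⟨k, rfl⟩ := Nat.exists_eq_add_of_lt hp
    rw [show 2 * a + 1 + (2 * q + 1) + 2 * p + 1 = 2 * (a + q + p + 1) + 1 by ring,
      show 2 * a' + 1 + (2 * j + 1) + 2 * p + 1 = 2 * (a' + j + p + 1) + 1 by ring,
      show p + k + 1 - p - 1 = k by omega, h.T_oo, h.swap.T_oo, h.T_oo, smul_mul_smul_comm,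
      show p + k + 1 + 1 = (p + 1) + (k + 1) by ring,
      h.yx_gt, smul_smul]
    congr 1; ring

end DUSys

theorem central_aux (z : DUAlg) (h0 : Commute z uGen) (h1 : Commute z dGen) :
    z ∈ Subalgebra.center ℂ DUAlg := by
  rw [Subalgebra.mem_center_iff]
  intro b
  obtain ⟨f, rfl⟩ := RingQuot.mkAlgHom_surjective ℂ DownUpRel b
  change RingQuot.mkAlgHom ℂ DownUpRel f * z = z * RingQuot.mkAlgHom ℂ DownUpRel f
  induction f using FreeAlgebra.induction with
  | grade0 r => rw [AlgHom.commutes]; exact Algebra.commutes r z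
  | grade1 x =>
    fin_cases x
    · exact h0.symm
    · exact h1.symm
  | mul a b ha hb => rw [map_mul, mul_assoc, hb, ← mul_assoc, ha, mul_assoc]
  | add a b ha hb => rw [map_add, add_mul, mul_add, ha, hb]

theorem du_rel1 : dGen * dGen * uGen = uGen * dGen * dGen := by
  have := RingQuot.mkAlgHom_rel ℂ DownUpRel.rel1
  simp only [map_mul] at this
  exact this

theorem du_rel2 : dGen * uGen * uGen = uGen * uGen * dGen := by
  have := RingQuot.mkAlgHom_rel ℂ DownUpRel.rel2
  simp only [map_mul] at this
  exact this

theorem exists_sys : ∃ (R : Type) (_ : CommRing R) (_ : Algebra R DUAlg) (U D : R),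
    DUSys U D uGen dGen := by
  letI alg : Algebra (Subalgebra.center ℂ DUAlg) DUAlg :=
    RingHom.toAlgebra' (Subalgebra.center ℂ DUAlg).val.toRingHom (fun c x =>
      ((Subalgebra.mem_center_iff.mp c.2) x).symm)
  refine ⟨Subalgebra.center ℂ DUAlg, inferInstance, alg,
    ⟨uGen * uGen, central_aux _ ?_ ?_⟩, ⟨dGen * dGen, central_aux _ ?_ ?_⟩, ?_, ?_⟩
  · exact (mul_assoc _ _ _)
  · exact (du_rel2.symm.trans (mul_assoc _ _ _))
  · exact (du_rel1.trans (mul_assoc _ _ _))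
  · exact (mul_assoc _ _ _)
  · exact (mul_one _).symm
  · exact (mul_one _).symm

theorem lam_pow_self (n : ℕ) (hn : 0 < n) : lam n ^ n = 1 :=
  (Complex.isPrimitiveRoot_exp n hn.ne').pow_eq_one

open DUSys in
theorem combine (n a i j a' p q a3 b3 c3 a4 b4 c4 : ℕ) (hn : 0 < n)
    (h1 : T uGen dGen a i j * T uGen dGen a' p q = T uGen dGen a3 b3 c3)
    (h2 : T dGen uGen a i j * T dGen uGen a' p q = T dGen uGen a3 b3 c3)
    (h3 : T uGen dGen a i j * T dGen uGen a' p q = T uGen dGen a4 b4 c4)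
    (h4 : T dGen uGen a i j * T uGen dGen a' p q = T dGen uGen a4 b4 c4)
    (e1 : b3 + c3 = i + j + (p + q)) (e2 : p + q + (b4 + c4) = i + j + n) :
    orbitSum n a i j * orbitSum n a' p q =
      orbitSum n a3 b3 c3 + (lam n ^ (p + q)) • orbitSum n a4 b4 c4 := by
  change (T uGen dGen a i j + lam n ^ (i + j) • T dGen uGen a i j) *
    (T uGen dGen a' p q + lam n ^ (p + q) • T dGen uGen a' p q) =
    (T uGen dGen a3 b3 c3 + lam n ^ (b3 + c3) • T dGen uGen a3 b3 c3) +
    lam n ^ (p + q) • (T uGen dGen a4 b4 c4 + lam n ^ (b4 + c4) • T dGen uGen a4 b4 c4)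
  have e3 : lam n ^ (p + q) * lam n ^ (b4 + c4) = lam n ^ (i + j) := by
    rw [← pow_add, e2, pow_add, lam_pow_self n hn, mul_one]
  rw [smul_add, smul_smul, e3, ← h1, ← h2, ← h3, ← h4, e1, pow_add _ (i + j)]
  simp only [add_mul, mul_add, smul_mul_assoc, mul_smul_comm, smul_add, smul_smul]
  rw [mul_comm (lam n ^ (p + q))]
  abel

/-- For `n` even, the product of two degree-`n` orbit sums in the down-up
algebra `A(0,1)` (Proposition 3.2 of the paper). -/
theorem orbitSum_deg_n_mul_deg_n (n : ℕ) (hn : 0 < n) (hne : Even n)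
    (i j p q : ℕ) (hij : 2 * i + j ≤ n) (hpq : 2 * p + q ≤ n) :
    (Even j → Even q → p > i →
      orbitSum n (n - 2 * i - j) i j * orbitSum n (n - 2 * p - q) p q =
        orbitSum n (2 * n - 2 * i - j - 2 * p - q) (p + i) (q + j) +
          (lam n ^ (p + q)) •
            orbitSum n (n - j + q + 1) (p - i - 1) (n + 2 * i + j - 2 * p - q + 1)) ∧
    (Even j → Even q → p ≤ i →
      orbitSum n (n - 2 * i - j) i j * orbitSum n (n - 2 * p - q) p q =
        orbitSum n (2 * n - 2 * i - j - 2 * p - q) (p + i) (q + j) +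
          (lam n ^ (p + q)) •
            orbitSum n (n - 2 * i - j + q + 2 * p) (i - p) (n - q + j)) ∧
    (Even j → Odd q → 2 * p + q ≤ n + j - 1 → p ≥ i →
      orbitSum n (n - 2 * i - j) i j * orbitSum n (n - 2 * p - q) p q =
        (lam n ^ (p + q)) •
            orbitSum n (n - 2 * i - j + q - 1) (i + p + 1) (n - 2 * p - q + j - 1) +
          orbitSum n (2 * n - j - 2 * p - q) (p - i) (2 * i + j + q)) ∧
    (Even j → Odd q → 2 * p + q ≤ n + j - 1 → p < i →
      orbitSum n (n - 2 * i - j) i j * orbitSum n (n - 2 * p - q) p q =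
        (lam n ^ (p + q)) •
            orbitSum n (n - 2 * i - j + q - 1) (i + p + 1) (n - 2 * p - q + j - 1) +
          orbitSum n (2 * n - 2 * i - j - q + 1) (i - p - 1) (2 * p + j + q + 1)) ∧
    (Odd j → Even q → p > i →
      orbitSum n (n - 2 * i - j) i j * orbitSum n (n - 2 * p - q) p q =
        (lam n ^ (p + q)) •
            orbitSum n (n + q - 2 * i - j) (i + p) (n + j - 2 * p - q) +
          orbitSum n (2 * n - j - 2 * p - q + 1) (p - i - 1) (q + 2 * i + j + 1)) ∧
    (Odd j → Even q → p ≤ i →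
      orbitSum n (n - 2 * i - j) i j * orbitSum n (n - 2 * p - q) p q =
        (lam n ^ (p + q)) •
            orbitSum n (n + q - 2 * i - j) (i + p) (n + j - 2 * p - q) +
          orbitSum n (2 * n - 2 * i - j - q) (i - p) (2 * p + q + j)) ∧
    (Odd j → Odd q → p ≥ i →
      orbitSum n (n - 2 * i - j) i j * orbitSum n (n - 2 * p - q) p q =
        orbitSum n (2 * n - 2 * i - j - 2 * p - q - 1) (i + p + 1) (q + j - 1) +
          (lam n ^ (p + q)) •
            orbitSum n (n + q - j) (p - i) (n + 2 * i + j - 2 * p - q)) ∧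
    (Odd j → Odd q → p < i →
      orbitSum n (n - 2 * i - j) i j * orbitSum n (n - 2 * p - q) p q =
        orbitSum n (2 * n - 2 * i - j - 2 * p - q - 1) (i + p + 1) (q + j - 1) +
          (lam n ^ (p + q)) •
            orbitSum n (n - 2 * i - j + 2 * p + q + 1) (i - p - 1) (n - q + j + 1)) := by
  obtain ⟨R, _, _, U, D, hs⟩ := exists_sys
  refine ⟨?_, ?_, ?_, ?_, ?_, ?_, ?_, ?_⟩
  · intro hj hq hp
    have ha : Even (n - 2 * i - j) := by
      simp only [Nat.even_iff, Nat.odd_iff] at *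
      omega
    have ha' : Even (n - 2 * p - q) := by
      simp only [Nat.even_iff, Nat.odd_iff] at *
      omega
    have r := hs.ee _ i j _ p q ha hj ha' hq
    have r' := hs.swap.ee _ i j _ p q ha hj ha' hq
    have hq0 := hq
    have hj0 := hj
    simp only [Nat.even_iff, Nat.odd_iff] at hq0 hj0 ha ha'
    apply combine _ _ _ _ _ _ _ _ _ _ _ _ _ hn
    · convert r.1 using 2 <;> omega
    · convert r'.1 using 2 <;> omega
    · convert (r.2.1 hp) using 2 <;> omega
    · convert (r'.2.1 hp) using 2 <;> omega
    · omega
    · omega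
  · intro hj hq hp
    have ha : Even (n - 2 * i - j) := by
      simp only [Nat.even_iff, Nat.odd_iff] at *
      omega
    have ha' : Even (n - 2 * p - q) := by
      simp only [Nat.even_iff, Nat.odd_iff] at *
      omega
    have r := hs.ee _ i j _ p q ha hj ha' hq
    have r' := hs.swap.ee _ i j _ p q ha hj ha' hq
    have hq0 := hq
    have hj0 := hj
    simp only [Nat.even_iff, Nat.odd_iff] at hq0 hj0 ha ha'
    apply combine _ _ _ _ _ _ _ _ _ _ _ _ _ hn
    · convert r.1 using 2 <;> omega
    · convert r'.1 using 2 <;> omega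
    · convert (r.2.2 hp) using 2 <;> omega
    · convert (r'.2.2 hp) using 2 <;> omega
    · omega
    · omega
  · intro hj hq _ hp
    have ha : Even (n - 2 * i - j) := by
      simp only [Nat.even_iff, Nat.odd_iff] at *
      omega
    have ha' : Odd (n - 2 * p - q) := by
      simp only [Nat.even_iff, Nat.odd_iff] at *
      omega
    have r := hs.eo _ i j _ p q ha hj ha' hq
    have r' := hs.swap.eo _ i j _ p q ha hj ha' hq
    have hq0 := hq
    have hj0 := hj
    simp only [Nat.even_iff, Nat.odd_iff] at hq0 hj0 ha ha'
    refine Eq.trans ?_ (add_comm _ _)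
    apply combine _ _ _ _ _ _ _ _ _ _ _ _ _ hn
    · convert (r.2.1 hp) using 2 <;> omega
    · convert (r'.2.1 hp) using 2 <;> omega
    · convert r.1 using 2 <;> omega
    · convert r'.1 using 2 <;> omega
    · omega
    · omega
  · intro hj hq _ hp
    have ha : Even (n - 2 * i - j) := by
      simp only [Nat.even_iff, Nat.odd_iff] at *
      omega
    have ha' : Odd (n - 2 * p - q) := by
      simp only [Nat.even_iff, Nat.odd_iff] at *
      omega
    have r := hs.eo _ i j _ p q ha hj ha' hq
    have r' := hs.swap.eo _ i j _ p q ha hj ha' hq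
    have hq0 := hq
    have hj0 := hj
    simp only [Nat.even_iff, Nat.odd_iff] at hq0 hj0 ha ha'
    refine Eq.trans ?_ (add_comm _ _)
    apply combine _ _ _ _ _ _ _ _ _ _ _ _ _ hn
    · convert (r.2.2 hp) using 2 <;> omega
    · convert (r'.2.2 hp) using 2 <;> omega
    · convert r.1 using 2 <;> omega
    · convert r'.1 using 2 <;> omega
    · omega
    · omega
  · intro hj hq hp
    have ha : Odd (n - 2 * i - j) := by
      simp only [Nat.even_iff, Nat.odd_iff] at *
      omega
    have ha' : Even (n - 2 * p - q) := by
      simp only [Nat.even_iff, Nat.odd_iff] at *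
      omega
    have r := hs.oe _ i j _ p q ha hj ha' hq
    have r' := hs.swap.oe _ i j _ p q ha hj ha' hq
    have hq0 := hq
    have hj0 := hj
    simp only [Nat.even_iff, Nat.odd_iff] at hq0 hj0 ha ha'
    refine Eq.trans ?_ (add_comm _ _)
    apply combine _ _ _ _ _ _ _ _ _ _ _ _ _ hn
    · convert (r.2.1 hp) using 2 <;> omega
    · convert (r'.2.1 hp) using 2 <;> omega
    · convert r.1 using 2 <;> omega
    · convert r'.1 using 2 <;> omega
    · omega
    · omega
  · intro hj hq hp
    have ha : Odd (n - 2 * i - j) := by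
      simp only [Nat.even_iff, Nat.odd_iff] at *
      omega
    have ha' : Even (n - 2 * p - q) := by
      simp only [Nat.even_iff, Nat.odd_iff] at *
      omega
    have r := hs.oe _ i j _ p q ha hj ha' hq
    have r' := hs.swap.oe _ i j _ p q ha hj ha' hq
    have hq0 := hq
    have hj0 := hj
    simp only [Nat.even_iff, Nat.odd_iff] at hq0 hj0 ha ha'
    refine Eq.trans ?_ (add_comm _ _)
    apply combine _ _ _ _ _ _ _ _ _ _ _ _ _ hn
    · convert (r.2.2 hp) using 2 <;> omega
    · convert (r'.2.2 hp) using 2 <;> omega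
    · convert r.1 using 2 <;> omega
    · convert r'.1 using 2 <;> omega
    · omega
    · omega
  · intro hj hq hp
    have ha : Odd (n - 2 * i - j) := by
      simp only [Nat.even_iff, Nat.odd_iff] at *
      omega
    have ha' : Odd (n - 2 * p - q) := by
      simp only [Nat.even_iff, Nat.odd_iff] at *
      omega
    have r := hs.oo _ i j _ p q ha hj ha' hq
    have r' := hs.swap.oo _ i j _ p q ha hj ha' hq
    have hq0 := hq
    have hj0 := hj
    simp only [Nat.even_iff, Nat.odd_iff] at hq0 hj0 ha ha'
    apply combine _ _ _ _ _ _ _ _ _ _ _ _ _ hn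
    · convert r.1 using 2 <;> omega
    · convert r'.1 using 2 <;> omega
    · convert (r.2.1 hp) using 2 <;> omega
    · convert (r'.2.1 hp) using 2 <;> omega
    · omega
    · omega
  · intro hj hq hp
    have ha : Odd (n - 2 * i - j) := by
      simp only [Nat.even_iff, Nat.odd_iff] at *
      omega
    have ha' : Odd (n - 2 * p - q) := by
      simp only [Nat.even_iff, Nat.odd_iff] at *
      omega
    have r := hs.oo _ i j _ p q ha hj ha' hq
    have r' := hs.swap.oo _ i j _ p q ha hj ha' hq
    have hq0 := hq
    have hj0 := hj
    simp only [Nat.even_iff, Nat.odd_iff] at hq0 hj0 ha ha'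
    apply combine _ _ _ _ _ _ _ _ _ _ _ _ _ hn
    · convert r.1 using 2 <;> omega
    · convert r'.1 using 2 <;> omega
    · convert (r.2.2 hp) using 2 <;> omega
    · convert (r'.2.2 hp) using 2 <;> omega
    · omega
    · omega
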